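/- For 0 ≤ s ≤ r < ∞ let C(r,s) denote the class of simple graphs G whose vertex set can be partitioned into r possibly empty sets V₁,…,V_r such that V_i induces a complete graph in G for 1 ≤ i ≤ s and an edgeless graph for s < i ≤ r. Then for every hereditary graph class Q: W^{(r,s)} ∈ Q̂ if and only if every graph in C(r,s) on vertex set {1,…,n} belongs to Q_n, for every n ≥ 1. -/

import Mathlib

open MeasureTheory Set Filter

noncomputable section

/-- A graphon: a symmetric measurable function `ℝ → ℝ → ℝ` with values in `[0,1]`
(only its values on `[0,1]²` matter). -/
def IsGraphon (W : ℝ → ℝ → ℝ) : Prop :=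
  (∀ x y, W x y = W y x) ∧ Measurable (Function.uncurry W) ∧
    ∀ x y, W x y ∈ Set.Icc (0 : ℝ) 1

/-- The cut norm `‖U‖_□`, the supremum over measurable `S, T ⊆ [0,1]` of
`|∫_{S×T} U|`. -/
def cutNorm (U : ℝ → ℝ → ℝ) : ℝ :=
  sSup { r : ℝ | ∃ S T : Set ℝ, MeasurableSet S ∧ MeasurableSet T ∧
    S ⊆ Set.Icc 0 1 ∧ T ⊆ Set.Icc 0 1 ∧
    r = |∫ p in S ×ˢ T, U p.1 p.2| }

/-- `d_□(W₁, W₂) = ‖W₁ - W₂‖_□`. -/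
def dCut (W₁ W₂ : ℝ → ℝ → ℝ) : ℝ := cutNorm (fun x y => W₁ x y - W₂ x y)

/-- A Lebesgue-measure-preserving map `[0,1] → [0,1]`. -/
def IsMPSelf (σ : ℝ → ℝ) : Prop :=
  MeasureTheory.MeasurePreserving σ
      (MeasureTheory.volume.restrict (Set.Icc (0:ℝ) 1))
      (MeasureTheory.volume.restrict (Set.Icc (0:ℝ) 1)) ∧
    Set.MapsTo σ (Set.Icc (0:ℝ) 1) (Set.Icc (0:ℝ) 1)

/-- The cut distance `δ_□(W₁, W₂)`. -/
def deltaCut (W₁ W₂ : ℝ → ℝ → ℝ) : ℝ :=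
  sInf { r : ℝ | ∃ σ₁ σ₂ : ℝ → ℝ, IsMPSelf σ₁ ∧ IsMPSelf σ₂ ∧
    r = cutNorm (fun x y => W₁ (σ₁ x) (σ₁ y) - W₂ (σ₂ x) (σ₂ y)) }

/-- The binary entropy function `h` (base-2 logarithm; `logb 2 0 = 0` by convention,
so `h 0 = h 1 = 0`). -/
def binEnt (x : ℝ) : ℝ := -x * Real.logb 2 x - (1 - x) * Real.logb 2 (1 - x)

/-- `h̃ x = h (min x (1/2))`. -/
def htilde (x : ℝ) : ℝ := binEnt (min x (1/2))

/-- The entropy `Ent(W) = ∫₀¹∫₀¹ h(W(x,y)) dx dy` of a graphon. -/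
def graphonEnt (W : ℝ → ℝ → ℝ) : ℝ :=
  ∫ x in Set.Icc (0:ℝ) 1, ∫ y in Set.Icc (0:ℝ) 1, binEnt (W x y)

open Classical in
/-- The graphon `W_G` of a simple graph `G` on `{1, …, n}` (vertices as `Fin n`,
vertex `i : Fin n` representing `i+1`): `W_G x y = 1` iff `⌈nx⌉⌈ny⌉ ∈ E(G)`. -/
def graphonOfGraph {n : ℕ} (G : SimpleGraph (Fin n)) : ℝ → ℝ → ℝ := fun x y =>
  if ∃ i j : Fin n, G.Adj i j ∧ ⌈(n : ℝ) * x⌉ = ((i : ℕ) : ℤ) + 1 ∧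
      ⌈(n : ℝ) * y⌉ = ((j : ℕ) : ℤ) + 1
  then 1 else 0

/-- A labelled graph class: a set of graphs on `{1,…,n}` for each `n`. -/
abbrev GraphClass := ∀ n : ℕ, Set (SimpleGraph (Fin n))

/-- A graph class is closed under relabelling by permutations. -/
def IsGraphClass (Q : GraphClass) : Prop :=
  ∀ (n : ℕ) (π : Equiv.Perm (Fin n)) (G : SimpleGraph (Fin n)),
    G ∈ Q n → G.comap ⇑π ∈ Q n

/-- A hereditary graph class: a graph class closed under taking induced subgraphs
(relabelled by the order-preserving bijection). -/
def IsHereditary (Q : GraphClass) : Prop :=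
  IsGraphClass Q ∧
    ∀ (m n : ℕ) (f : Fin m → Fin n), StrictMono f →
      ∀ G ∈ Q n, G.comap f ∈ Q m

/-- `Q̂`: the set of graphons which are limits (in cut distance) of sequences of graphs in
the class `Q` whose orders tend to infinity. -/
def limitSet (Q : GraphClass) : Set (ℝ → ℝ → ℝ) :=
  { W | IsGraphon W ∧
    ∃ (nk : ℕ → ℕ) (Gk : ∀ k, SimpleGraph (Fin (nk k))),
      (∀ k, Gk k ∈ Q (nk k)) ∧ Filter.Tendsto nk Filter.atTop Filter.atTop ∧
      Filter.Tendsto (fun k => deltaCut (graphonOfGraph (Gk k)) W) Filter.atTop (nhds 0) }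

/-- `C(n,2) = n(n-1)/2` as a real number. -/
def choose2 (n : ℕ) : ℝ := (n : ℝ) * ((n : ℝ) - 1) / 2

open Classical in
/-- The step function `E[W | P]` obtained by averaging `W` over the products of the
parts of the partition `P` of `[0,1]`. -/
def condExpPart {k : ℕ} (P : Fin k → Set ℝ) (W : ℝ → ℝ → ℝ) : ℝ → ℝ → ℝ := fun x y =>
  ∑ i : Fin k, ∑ j : Fin k,
    if x ∈ P i ∧ y ∈ P j then ⨍ p in (P i) ×ˢ (P j), W p.1 p.2 else 0

/-- `W̄_n`: the step function of `W` for the partition of `[0,1]` into `n` consecutive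
intervals of length `1/n`. -/
def barStep (n : ℕ) (W : ℝ → ℝ → ℝ) : ℝ → ℝ → ℝ :=
  condExpPart (fun i : Fin n => Set.Ioc (((i : ℕ) : ℝ)/n) ((((i : ℕ) : ℝ) + 1)/n)) W

/-- `N̂_□(n, δ; W)`: the number of graphs `G` on `{1,…,n}` with `d_□(W_G, W) ≤ δ`. -/
def NhatCut (n : ℕ) (δ : ℝ) (W : ℝ → ℝ → ℝ) : ℕ :=
  Nat.card {G : SimpleGraph (Fin n) // dCut (graphonOfGraph G) W ≤ δ}

/-- `N_□(n, δ; W)`: the number of graphs `G` on `{1,…,n}` with `δ_□(W_G, W) ≤ δ`. -/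
def NCut (n : ℕ) (δ : ℝ) (W : ℝ → ℝ → ℝ) : ℕ :=
  Nat.card {G : SimpleGraph (Fin n) // deltaCut (graphonOfGraph G) W ≤ δ}

open Classical in
/-- The induced density `p(F; W)` of a graph `F` on `{1,…,k}` in a graphon `W`. -/
def inducedDensity {k : ℕ} (F : SimpleGraph (Fin k)) (W : ℝ → ℝ → ℝ) : ℝ :=
  ∫ x : Fin k → ℝ in Set.univ.pi (fun _ : Fin k => Set.Icc (0:ℝ) 1),
    ∏ i : Fin k, ∏ j : Fin k,
      if i < j then (if F.Adj i j then W (x i) (x j) else 1 - W (x i) (x j)) else 1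

open Classical in
/-- The randomness support graphon `1_{rand(W)}` of `W`. -/
def randIndicator (W : ℝ → ℝ → ℝ) : ℝ → ℝ → ℝ := fun x y =>
  if 0 < W x y ∧ W x y < 1 then 1 else 0

/-- A kernel `U` is `K_r`-free if `∏_{i<j} U(x_i, x_j) = 0` for a.e. `x ∈ [0,1]^r`. -/
def KFree (r : ℕ) (U : ℝ → ℝ → ℝ) : Prop :=
  ∀ᵐ x ∂(MeasureTheory.volume.restrict (Set.univ.pi fun _ : Fin r => Set.Icc (0:ℝ) 1)),
    (∏ i : Fin r, ∏ j : Fin r, if i < j then U (x i) (x j) else 1) = 0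

open Classical in
/-- The graphon `W^{(r,s)}`: equal to `1/2` off the diagonal blocks, `1` on the first `s`
diagonal blocks `I_i × I_i`, and `0` on the remaining diagonal blocks. -/
def Wrs (r s : ℕ) : ℝ → ℝ → ℝ := fun x y =>
  if ∃ i j : Fin r, i ≠ j ∧ x ∈ Set.Ioc (((i:ℕ):ℝ)/r) ((((i:ℕ):ℝ)+1)/r) ∧
      y ∈ Set.Ioc (((j:ℕ):ℝ)/r) ((((j:ℕ):ℝ)+1)/r)
  then 1/2
  else if ∃ i : Fin r, (i:ℕ) < s ∧ x ∈ Set.Ioc (((i:ℕ):ℝ)/r) ((((i:ℕ):ℝ)+1)/r) ∧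
      y ∈ Set.Ioc (((i:ℕ):ℝ)/r) ((((i:ℕ):ℝ)+1)/r)
  then 1 else 0

/-- `E_r = ⋃_{i ≠ j} I_i × I_j` where `I_i`, `i = 1, …, r`, are the consecutive
intervals of length `1/r` in `[0,1]`. -/
def Er (r : ℕ) : Set (ℝ × ℝ) :=
  ⋃ (i : Fin r) (j : Fin r) (_ : i ≠ j),
    (Set.Ioc (((i:ℕ):ℝ)/r) ((((i:ℕ):ℝ)+1)/r)) ×ˢ (Set.Ioc (((j:ℕ):ℝ)/r) ((((j:ℕ):ℝ)+1)/r))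

/-- `R_r`: the set of graphons equal to `1/2` on `E_r` and `{0,1}`-valued elsewhere
on `[0,1]²`. -/
def Rset (r : ℕ) : Set (ℝ → ℝ → ℝ) :=
  { W | IsGraphon W ∧ (∀ p ∈ Er r, W p.1 p.2 = 1/2) ∧
      ∀ p ∈ ((Set.Icc (0:ℝ) 1) ×ˢ (Set.Icc (0:ℝ) 1)) \ Er r,
        W p.1 p.2 = 0 ∨ W p.1 p.2 = 1 }

/-- A graphon is random-free if it is `{0,1}`-valued a.e. on `[0,1]²`. -/
def IsRandomFree (W : ℝ → ℝ → ℝ) : Prop :=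
  ∀ᵐ p ∂(MeasureTheory.volume.restrict ((Set.Icc (0:ℝ) 1) ×ˢ (Set.Icc (0:ℝ) 1))),
    W (Prod.fst p) (Prod.snd p) = 0 ∨ W (Prod.fst p) (Prod.snd p) = 1


/-- Membership in the class `C(r,s)`: the vertex set can be partitioned into `r` (possibly
empty) parts such that the first `s` parts induce complete subgraphs and the remaining
parts induce edgeless subgraphs. -/
def MemCRS (r s : ℕ) {n : ℕ} (G : SimpleGraph (Fin n)) : Prop :=
  ∃ c : Fin n → Fin r, ∀ u v : Fin n, u ≠ v → c u = c v →
    (((c u : ℕ) < s → G.Adj u v) ∧ (s ≤ (c u : ℕ) → ¬ G.Adj u v))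


/-! ### Hadamard matrices -/

lemma had_exists (k : ℕ) : ∃ H : Fin (2^k) → Fin (2^k) → ℝ,
    (∀ a b, H a b = 1 ∨ H a b = -1) ∧ (∀ a b, H a b = H b a) ∧
    ∀ a a', ∑ b, H a b * H a' b = if a = a' then ((2^k : ℕ) : ℝ) else 0 := by
  induction k with
  | zero =>
    refine ⟨fun _ _ => 1, fun _ _ => Or.inl rfl, fun _ _ => rfl, ?_⟩
    intro a a'
    have : a = a' := Subsingleton.elim (α := Fin 1) a a'
    simp [this]
  | succ k ih =>
    obtain ⟨H, h1, h2, h3⟩ := ih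
    rw [pow_succ]
    let K : Fin 2 → Fin 2 → ℝ := fun i j => if i = 1 ∧ j = 1 then -1 else 1
    have K1 : ∀ a b, K a b = 1 ∨ K a b = -1 := by
      intro a b; simp only [K]; split_ifs <;> simp
    have K2 : ∀ a b, K a b = K b a := by
      intro a b; simp only [K, and_comm]
    have K3 : ∀ a a', ∑ b, K a b * K a' b = if a = a' then (2 : ℝ) else 0 := by
      intro a a'
      fin_cases a <;> fin_cases a' <;> simp [K] <;> norm_num
    let e := finProdFinEquiv (m := 2^k) (n := 2)
    refine ⟨fun u v => H (e.symm u).1 (e.symm v).1 * K (e.symm u).2 (e.symm v).2, ?_, ?_, ?_⟩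
    · intro a b
      rcases h1 (e.symm a).1 (e.symm b).1 with h | h <;>
      rcases K1 (e.symm a).2 (e.symm b).2 with h' | h' <;> simp [h, h']
    · intro a b
      simp only
      rw [h2, K2]
    · intro a a'
      rw [← e.sum_comp]
      simp only [Equiv.symm_apply_apply]
      rw [Fintype.sum_prod_type]
      have : ∀ x y, H (e.symm a).1 x * K (e.symm a).2 y * (H (e.symm a').1 x * K (e.symm a').2 y)
          = (H (e.symm a).1 x * H (e.symm a').1 x) * (K (e.symm a).2 y * K (e.symm a').2 y) := by
        intros; ring
      simp only [this]
      rw [← Finset.sum_mul_sum, h3, K3]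
      by_cases h : a = a'
      · simp [h]
      · have : ¬ ((e.symm a).1 = (e.symm a').1 ∧ (e.symm a).2 = (e.symm a').2) := by
          intro hh
          exact h (e.symm.injective (Prod.ext hh.1 hh.2))
        rw [if_neg h]
        by_cases hh : (e.symm a).1 = (e.symm a').1
        · rw [if_neg (fun h' => this ⟨hh, h'⟩)]; simp
        · rw [if_neg hh]; simp

lemma lindsey {m : ℕ} (H : Fin m → Fin m → ℝ)
    (h2 : ∀ a b, H a b = H b a)
    (h3 : ∀ a a', ∑ b, H a b * H a' b = if a = a' then (m : ℝ) else 0)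
    (c : ℝ) (f g : Fin m → ℝ) (hc : 0 ≤ c)
    (hf : ∀ a, 0 ≤ f a ∧ f a ≤ c) (hg : ∀ a, 0 ≤ g a ∧ g a ≤ c) :
    |∑ a, ∑ b, H a b * (f a * g b)| ≤ c^2 * (m * Real.sqrt m) := by
  have sqb : ∀ f : Fin m → ℝ, (∀ a, 0 ≤ f a ∧ f a ≤ c) → ∑ a, f a ^ 2 ≤ m * c^2 := by
    intro f hf
    calc ∑ a, f a ^ 2 ≤ ∑ a : Fin m, c^2 :=
          Finset.sum_le_sum fun a _ => pow_le_pow_left₀ (hf a).1 (hf a).2 2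
      _ = m * c^2 := by simp
  have e1 : ∑ a, ∑ b, H a b * (f a * g b) = ∑ a, f a * ∑ b, H a b * g b := by
    refine Finset.sum_congr rfl fun a _ => ?_
    rw [Finset.mul_sum]
    exact Finset.sum_congr rfl fun b _ => by ring
  have e2 : ∑ a, (∑ b, H a b * g b)^2 = m * ∑ b, g b ^ 2 := by
    have : ∀ a, (∑ b, H a b * g b)^2 = ∑ b, ∑ b', g b * g b' * (H b a * H b' a) := by
      intro a
      rw [sq, Finset.sum_mul_sum]
      refine Finset.sum_congr rfl fun b _ => Finset.sum_congr rfl fun b' _ => ?_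
      rw [h2 a b, h2 a b']; ring
    simp only [this]
    rw [Finset.sum_comm, Finset.mul_sum]
    refine Finset.sum_congr rfl fun b _ => ?_
    rw [Finset.sum_comm]
    simp only [← Finset.mul_sum, h3]
    simp; ring
  have e3 : (∑ a, f a * ∑ b, H a b * g b)^2 ≤ (c^2 * (m * Real.sqrt m))^2 := by
    have hs : Real.sqrt m ^ 2 = m := Real.sq_sqrt (Nat.cast_nonneg m)
    calc (∑ a, f a * ∑ b, H a b * g b)^2 ≤ (∑ a, f a ^ 2) * ∑ a, (∑ b, H a b * g b)^2 :=
          Finset.sum_mul_sq_le_sq_mul_sq _ _ _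
      _ ≤ (m * c^2) * (m * (m * c^2)) := by
          rw [e2]
          have := sqb f hf
          have := sqb g hg
          have : 0 ≤ ∑ b, g b ^ 2 := Finset.sum_nonneg fun _ _ => sq_nonneg _
          gcongr
      _ = (c^2 * (m * Real.sqrt m))^2 := by
          rw [mul_pow, mul_pow, hs]; ring
  rw [e1]
  exact abs_le_of_sq_le_sq e3 (by positivity)

/-! ### Cells -/

lemma ceil_cell (n : ℕ) (hn : 0 < n) (u : ℤ) (x : ℝ) :
    ⌈(n : ℝ) * x⌉ = u + 1 ↔ x ∈ Set.Ioc ((u:ℝ)/n) (((u:ℝ)+1)/n) := by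
  have hn' : (0:ℝ) < n := by exact_mod_cast hn
  rw [Int.ceil_eq_iff, Set.mem_Ioc, div_lt_iff₀ hn', le_div_iff₀ hn', mul_comm]
  push_cast
  simp

lemma mem_block (r m : ℕ) (hr : 0 < r) (hm : 0 < m) (i : Fin r) (x : ℝ) :
    x ∈ Set.Ioc (((i:ℕ):ℝ)/r) ((((i:ℕ):ℝ)+1)/r) ↔
      ∃ a : Fin m, ⌈((r * m : ℕ) : ℝ) * x⌉ =
        (((finProdFinEquiv (i, a) : Fin (r*m)) : ℕ) : ℤ) + 1 := by
  have hr' : (0:ℝ) < r := by exact_mod_cast hr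
  have hm' : (0:ℝ) < m := by exact_mod_cast hm
  rw [Set.mem_Ioc, div_lt_iff₀ hr', le_div_iff₀ hr']
  constructor
  · rintro ⟨h1, h2⟩
    have h3 : ((i:ℕ):ℤ) * m < ⌈((r * m : ℕ) : ℝ) * x⌉ := by
      rw [Int.lt_ceil]; push_cast; nlinarith
    have h4 : ⌈((r * m : ℕ) : ℝ) * x⌉ ≤ (((i:ℕ):ℤ) + 1) * m := by
      rw [Int.ceil_le]; push_cast; nlinarith
    generalize ⌈((r * m : ℕ) : ℝ) * x⌉ = k at h3 h4
    obtain ⟨a, ha⟩ : ∃ a : ℕ, k = ((i:ℕ):ℤ) * m + 1 + a := by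
      refine ⟨(k - (((i:ℕ):ℤ) * m + 1)).toNat, ?_⟩
      rw [Int.toNat_of_nonneg (by linarith)]; ring
    refine ⟨⟨a, ?_⟩, ?_⟩
    · zify; linarith
    · simp [finProdFinEquiv]; linarith
  · rintro ⟨a, h⟩
    rw [Int.ceil_eq_iff] at h
    simp [finProdFinEquiv] at h
    have ha : ((a:ℕ):ℝ) + 1 ≤ m := by exact_mod_cast a.2
    have ha0 : (0:ℝ) ≤ ((a:ℕ):ℝ) := by positivity
    obtain ⟨h1, h2⟩ := h
    constructor
    · by_contra! hc
      nlinarith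
    · by_contra! hc
      nlinarith

lemma cell_measurable (n : ℕ) (u : ℤ) : MeasurableSet {x : ℝ | ⌈(n : ℝ) * x⌉ = u} := by
  have : Measurable fun x : ℝ => ⌈(n : ℝ) * x⌉ := by fun_prop
  exact this (measurableSet_singleton u)

lemma cell_measure (n : ℕ) (hn : 0 < n) (u : ℤ) :
    volume {x : ℝ | ⌈(n : ℝ) * x⌉ = u} = ENNReal.ofReal (1 / n) := by
  have : {x : ℝ | ⌈(n : ℝ) * x⌉ = u} = Set.Ioc (((u-1 : ℤ):ℝ)/n) ((((u-1 : ℤ):ℝ)+1)/n) := by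
    ext x
    rw [← ceil_cell n hn]; simp
  rw [this, Real.volume_Ioc]
  congr 1
  ring

lemma measurable_gog {n : ℕ} (G : SimpleGraph (Fin n)) :
    Measurable (Function.uncurry (graphonOfGraph G)) := by
  unfold graphonOfGraph Function.uncurry
  refine Measurable.ite ?_ measurable_const measurable_const
  simp only [Set.ofPred_exists]
  refine MeasurableSet.iUnion fun i => MeasurableSet.iUnion fun j => ?_
  refine MeasurableSet.inter (MeasurableSet.const _) (MeasurableSet.inter ?_ ?_)
  · exact measurable_fst (cell_measurable n _)
  · exact measurable_snd (cell_measurable n _)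

lemma isGraphon_Wrs (r s : ℕ) : IsGraphon (Wrs r s) := by
  refine ⟨?_, ?_, ?_⟩
  · intro x y
    unfold Wrs
    congr 1
    · apply propext
      constructor <;> rintro ⟨i, j, h, h1, h2⟩ <;> exact ⟨j, i, h.symm, h2, h1⟩
    · congr 1
      apply propext
      constructor <;> rintro ⟨i, h, h1, h2⟩ <;> exact ⟨i, h, h2, h1⟩
  · unfold Wrs Function.uncurry
    refine Measurable.ite ?_ measurable_const (Measurable.ite ?_ measurable_const measurable_const)
    · simp only [Set.ofPred_exists]
      refine MeasurableSet.iUnion fun i => MeasurableSet.iUnion fun j => ?_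
      refine MeasurableSet.inter (MeasurableSet.const _) (MeasurableSet.inter ?_ ?_)
      · exact measurable_fst measurableSet_Ioc
      · exact measurable_snd measurableSet_Ioc
    · simp only [Set.ofPred_exists]
      refine MeasurableSet.iUnion fun i => ?_
      refine MeasurableSet.inter (MeasurableSet.const _) (MeasurableSet.inter ?_ ?_)
      · exact measurable_fst measurableSet_Ioc
      · exact measurable_snd measurableSet_Ioc
  · intro x y
    unfold Wrs
    split_ifs <;> norm_num

lemma cutNorm_nonneg (U : ℝ → ℝ → ℝ) : 0 ≤ cutNorm U := by
  apply Real.sSup_nonneg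
  rintro x ⟨S, T, -, -, -, -, rfl⟩
  positivity

lemma isMP_id : IsMPSelf (fun x => x) := ⟨MeasurePreserving.id _, fun _ h => h⟩

lemma deltaCut_nonneg (W₁ W₂ : ℝ → ℝ → ℝ) : 0 ≤ deltaCut W₁ W₂ := by
  apply Real.sInf_nonneg
  rintro x ⟨_, _, -, -, rfl⟩
  exact cutNorm_nonneg _

lemma deltaCut_le (W₁ W₂ : ℝ → ℝ → ℝ) : deltaCut W₁ W₂ ≤ dCut W₁ W₂ := by
  apply csInf_le
  · refine ⟨0, ?_⟩
    rintro x ⟨_, _, -, -, rfl⟩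
    exact cutNorm_nonneg _
  · exact ⟨_, _, isMP_id, isMP_id, rfl⟩

/-! ### The quasirandom graphs -/

/-- The blow-up quasirandom graph. -/
def hadGraph (r s m : ℕ) (H : Fin m → Fin m → ℝ) (h2 : ∀ a b, H a b = H b a) :
    SimpleGraph (Fin (r * m)) where
  Adj u v := u ≠ v ∧
    (((finProdFinEquiv.symm u).1 = (finProdFinEquiv.symm v).1 ∧
      ((finProdFinEquiv.symm u).1 : ℕ) < s) ∨
     ((finProdFinEquiv.symm u).1 ≠ (finProdFinEquiv.symm v).1 ∧
      H (finProdFinEquiv.symm u).2 (finProdFinEquiv.symm v).2 = 1))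
  symm := ⟨by
    rintro u v ⟨h, h'⟩
    refine ⟨h.symm, ?_⟩
    rcases h' with ⟨h3, h4⟩ | ⟨h3, h4⟩
    · exact Or.inl ⟨h3.symm, h3 ▸ h4⟩
    · exact Or.inr ⟨h3.symm, by rw [h2]; exact h4⟩⟩
  loopless := ⟨fun u h => h.1 rfl⟩

lemma hadGraph_mem (r s m : ℕ) (H : Fin m → Fin m → ℝ) (h2 : ∀ a b, H a b = H b a) :
    MemCRS r s (hadGraph r s m H h2) := by
  refine ⟨fun u => (finProdFinEquiv.symm u).1, fun u v huv hc => ⟨fun h => ?_, fun h h' => ?_⟩⟩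
  · exact ⟨huv, Or.inl ⟨hc, h⟩⟩
  · rcases h'.2 with ⟨_, h4⟩ | ⟨h3, _⟩
    · exact absurd h4 (not_lt.2 h)
    · exact h3 hc

open Classical in
/-- Difference matrix. -/
def diffMat (r s m : ℕ) (H : Fin m → Fin m → ℝ) (i : Fin r) (a : Fin m) (j : Fin r) (b : Fin m) :
    ℝ :=
  if i = j then (if (i : ℕ) < s ∧ a = b then -1 else 0) else H a b / 2

open Classical in
lemma diff_eq (r s m : ℕ) (hr : 0 < r) (hm : 0 < m) (H : Fin m → Fin m → ℝ)
    (h1 : ∀ a b, H a b = 1 ∨ H a b = -1)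
    (h2 : ∀ a b, H a b = H b a) (x y : ℝ) :
    graphonOfGraph (hadGraph r s m H h2) x y - Wrs r s x y =
      ∑ i : Fin r, ∑ j : Fin r, ∑ a : Fin m, ∑ b : Fin m, diffMat r s m H i a j b *
        ((if ⌈((r * m : ℕ) : ℝ) * x⌉ =
          (((finProdFinEquiv (i, a) : Fin (r*m)) : ℕ) : ℤ) + 1 then 1 else 0) *
        (if ⌈((r * m : ℕ) : ℝ) * y⌉ =
          (((finProdFinEquiv (j, b) : Fin (r*m)) : ℕ) : ℤ) + 1 then 1 else 0)) := by
  unfold graphonOfGraph Wrs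
  simp only [mem_block r m hr hm]
  generalize ⌈((r * m : ℕ) : ℝ) * x⌉ = k
  generalize ⌈((r * m : ℕ) : ℝ) * y⌉ = l
  by_cases hk : ∃ i : Fin r, ∃ a : Fin m, k = (((finProdFinEquiv (i, a) : Fin (r*m)) : ℕ) : ℤ) + 1
  swap
  · push Not at hk
    have hk' : ∀ u : Fin (r*m), k ≠ ((u:ℕ):ℤ) + 1 := by
      intro u
      have := hk (finProdFinEquiv.symm u).1 (finProdFinEquiv.symm u).2
      simpa only [Prod.mk.eta, Equiv.apply_symm_apply] using this
    simp [hk, hk', -finProdFinEquiv_apply_val]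
  by_cases hl : ∃ i : Fin r, ∃ a : Fin m, l = (((finProdFinEquiv (i, a) : Fin (r*m)) : ℕ) : ℤ) + 1
  swap
  · push Not at hl
    have hl' : ∀ u : Fin (r*m), l ≠ ((u:ℕ):ℤ) + 1 := by
      intro u
      have := hl (finProdFinEquiv.symm u).1 (finProdFinEquiv.symm u).2
      simpa only [Prod.mk.eta, Equiv.apply_symm_apply] using this
    simp [hl, hl', -finProdFinEquiv_apply_val]
  obtain ⟨i, a, rfl⟩ := hk
  obtain ⟨j, b, rfl⟩ := hl
  have key : ∀ u v : Fin (r*m), (((u:ℕ):ℤ) + 1 = ((v:ℕ):ℤ) + 1) ↔ u = v := by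
    intro u v
    constructor
    · intro h; ext; omega
    · rintro rfl; rfl
  simp only [key, EmbeddingLike.apply_eq_iff_eq, Prod.mk.injEq]
  have rhs : ∑ i' : Fin r, ∑ j' : Fin r, ∑ a' : Fin m, ∑ b' : Fin m, diffMat r s m H i' a' j' b' *
        ((if i = i' ∧ a = a' then 1 else 0) * (if j = j' ∧ b = b' then 1 else 0))
        = diffMat r s m H i a j b := by
    rw [Finset.sum_eq_single i, Finset.sum_eq_single j, Finset.sum_eq_single a,
      Finset.sum_eq_single b]
    · simp
    · intro b' _ h; simp [h.symm]
    · simp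
    · intro b' _ h; simp [h.symm]
    · simp
    · intro b' _ h; simp [h.symm]
    · simp
    · intro b' _ h; simp [h.symm]
    · simp
  rw [rhs]
  have l1 : (∃ u v : Fin (r*m), (hadGraph r s m H h2).Adj u v ∧ finProdFinEquiv (i,a) = u ∧
      finProdFinEquiv (j,b) = v) ↔ (¬ (i = j ∧ a = b) ∧ ((i = j ∧ (i:ℕ) < s) ∨ (i ≠ j ∧ H a b = 1))) := by
    constructor
    · rintro ⟨_, _, h, rfl, rfl⟩
      simpa [hadGraph, -finProdFinEquiv_symm_apply, -finProdFinEquiv_apply_val] using h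
    · intro h
      exact ⟨_, _, by simpa [hadGraph, -finProdFinEquiv_symm_apply, -finProdFinEquiv_apply_val] using h, rfl, rfl⟩
  have l2 : (∃ i' j' : Fin r, i' ≠ j' ∧ (∃ a' : Fin m, i = i' ∧ a = a') ∧
      (∃ a' : Fin m, j = j' ∧ b = a')) ↔ i ≠ j := by
    constructor
    · rintro ⟨_, _, h, ⟨_, rfl, _⟩, ⟨_, rfl, _⟩⟩; exact h
    · intro h; exact ⟨i, j, h, ⟨a, rfl, rfl⟩, ⟨b, rfl, rfl⟩⟩
  have l3 : (∃ i' : Fin r, (i':ℕ) < s ∧ (∃ a' : Fin m, i = i' ∧ a = a') ∧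
      (∃ a' : Fin m, j = i' ∧ b = a')) ↔ i = j ∧ (i:ℕ) < s := by
    constructor
    · rintro ⟨_, h, ⟨_, rfl, _⟩, ⟨_, rfl, _⟩⟩; exact ⟨rfl, h⟩
    · rintro ⟨rfl, h⟩; exact ⟨i, h, ⟨a, rfl, rfl⟩, ⟨b, rfl, rfl⟩⟩
  simp only [l1, l2, l3]
  unfold diffMat
  by_cases hij : i = j
  · clear rhs l1 l2 l3
    subst hij
    by_cases his : (i:ℕ) < s <;> by_cases hab : a = b <;> simp [his, hab]
  · rcases h1 a b with h | h <;> simp [hij, h] <;> norm_num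

open Classical in
lemma dCut_had (r s m : ℕ) (hr : 0 < r) (hm : 0 < m) (H : Fin m → Fin m → ℝ)
    (h1 : ∀ a b, H a b = 1 ∨ H a b = -1)
    (h2 : ∀ a b, H a b = H b a)
    (h3 : ∀ a a', ∑ b, H a b * H a' b = if a = a' then (m : ℝ) else 0) :
    dCut (graphonOfGraph (hadGraph r s m H h2)) (Wrs r s) ≤ 1 / Real.sqrt m := by
  apply Real.sSup_le _ (by positivity)
  rintro _ ⟨S, T, hS, hT, hS1, hT1, rfl⟩
  have hn : 0 < r * m := Nat.mul_pos hr hm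
  simp only [diff_eq r s m hr hm H h1 h2]
  have fS : volume S ≠ ⊤ := ((measure_mono hS1).trans_lt (by simp)).ne
  have fT : volume T ≠ ⊤ := ((measure_mono hT1).trans_lt (by simp)).ne
  have : IsFiniteMeasure (volume.restrict S) := isFiniteMeasure_restrict.2 fS
  have : IsFiniteMeasure (volume.restrict T) := isFiniteMeasure_restrict.2 fT
  let q : Fin r → Fin m → ℝ → ℝ := fun i a x => if ⌈((r * m : ℕ) : ℝ) * x⌉ =
          (((finProdFinEquiv (i, a) : Fin (r*m)) : ℕ) : ℤ) + 1 then 1 else 0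
  have qm : ∀ i a, Measurable (q i a) := fun i a =>
    Measurable.ite (cell_measurable _ _) measurable_const measurable_const
  have qb : ∀ i a x, ‖q i a x‖ ≤ 1 := by
    intro i a x; simp only [q]; split_ifs <;> simp
  have qi : ∀ (A : Set ℝ), volume A ≠ ⊤ → ∀ i a, Integrable (q i a) (volume.restrict A) := by
    intro A hA i a
    have : IsFiniteMeasure (volume.restrict A) := isFiniteMeasure_restrict.2 hA
    exact Integrable.of_bound (qm i a).aestronglyMeasurable 1 (ae_of_all _ (qb i a))
  have qI : ∀ (A : Set ℝ), volume A ≠ ⊤ → ∀ i a, 0 ≤ ∫ x in A, q i a x ∧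
      ∫ x in A, q i a x ≤ 1 / ((r * m : ℕ) : ℝ) := by
    intro A hA i a
    constructor
    · apply integral_nonneg
      intro x; simp only [q]; dsimp; split_ifs <;> simp
    · have : q i a = Set.indicator {x : ℝ | ⌈((r * m : ℕ) : ℝ) * x⌉ =
          (((finProdFinEquiv (i, a) : Fin (r*m)) : ℕ) : ℤ) + 1} (fun _ => 1) := by
        ext x; simp [q, Set.indicator]
      rw [this, integral_indicator (cell_measurable _ _), setIntegral_const, smul_eq_mul, mul_one]
      have h : (volume.restrict A).real {x : ℝ | ⌈((r * m : ℕ) : ℝ) * x⌉ =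
          (((finProdFinEquiv (i, a) : Fin (r*m)) : ℕ) : ℤ) + 1} ≤ volume.real {x : ℝ | ⌈((r * m : ℕ) : ℝ) * x⌉ =
          (((finProdFinEquiv (i, a) : Fin (r*m)) : ℕ) : ℤ) + 1} := by
        apply ENNReal.toReal_mono
        · rw [cell_measure _ hn]; exact ENNReal.ofReal_ne_top
        · exact Measure.restrict_apply_le _ _
      refine h.trans (le_of_eq ?_)
      rw [Measure.real, cell_measure _ hn, ENNReal.toReal_ofReal (by positivity)]
  have hvol : (volume : Measure (ℝ × ℝ)).restrict (S ×ˢ T) =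
      (volume.restrict S).prod (volume.restrict T) := by
    rw [Measure.prod_restrict]; rfl
  have hint : ∀ i a j b, Integrable (fun p : ℝ × ℝ => diffMat r s m H i a j b *
      (q i a p.1 * q j b p.2)) ((volume : Measure (ℝ × ℝ)).restrict (S ×ˢ T)) := by
    intro i a j b
    rw [hvol]
    exact ((qi S fS i a).mul_prod (qi T fT j b)).const_mul _
  have main : ∫ p in S ×ˢ T, ∑ i : Fin r, ∑ j : Fin r, ∑ a : Fin m, ∑ b : Fin m,
      diffMat r s m H i a j b * (q i a p.1 * q j b p.2) =
      ∑ i : Fin r, ∑ j : Fin r, ∑ a : Fin m, ∑ b : Fin m,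
      diffMat r s m H i a j b * ((∫ x in S, q i a x) * (∫ x in T, q j b x)) := by
    rw [integral_finsetSum _ fun i _ => integrable_finsetSum _ fun j _ =>
      integrable_finsetSum _ fun a _ => integrable_finsetSum _ fun b _ => hint i a j b]
    refine Finset.sum_congr rfl fun i _ => ?_
    rw [integral_finsetSum _ fun j _ =>
      integrable_finsetSum _ fun a _ => integrable_finsetSum _ fun b _ => hint i a j b]
    refine Finset.sum_congr rfl fun j _ => ?_
    rw [integral_finsetSum _ fun a _ => integrable_finsetSum _ fun b _ => hint i a j b]
    refine Finset.sum_congr rfl fun a _ => ?_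
    rw [integral_finsetSum _ fun b _ => hint i a j b]
    refine Finset.sum_congr rfl fun b _ => ?_
    rw [integral_const_mul, hvol, integral_prod_mul]
  change |∫ p in S ×ˢ T, ∑ i : Fin r, ∑ j : Fin r, ∑ a : Fin m, ∑ b : Fin m,
      diffMat r s m H i a j b * (q i a p.1 * q j b p.2)| ≤ _
  rw [main]
  set c : ℝ := 1 / ((r * m : ℕ) : ℝ) with hc
  have c0 : 0 ≤ c := by positivity
  have m1 : 1 ≤ Real.sqrt m := by
    rw [Real.one_le_sqrt]; exact_mod_cast hm
  have m0 : (0:ℝ) < m := by exact_mod_cast hm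
  have r0 : (0:ℝ) < r := by exact_mod_cast hr
  have blk : ∀ i j : Fin r, |∑ a : Fin m, ∑ b : Fin m,
      diffMat r s m H i a j b * ((∫ x in S, q i a x) * (∫ x in T, q j b x))|
      ≤ c^2 * (m * Real.sqrt m) := by
    intro i j
    by_cases hij : i = j
    · subst hij
      have : ∀ a b, |diffMat r s m H i a i b * ((∫ x in S, q i a x) * (∫ x in T, q i b x))|
          ≤ if a = b then c^2 else 0 := by
        intro a b
        have hA := qI S fS i a
        have hB := qI T fT i b
        unfold diffMat
        by_cases hab : a = b
        · by_cases his : (i:ℕ) < s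
          · simp only [his, hab, and_self, if_true]
            subst hab
            rw [abs_mul, abs_neg, abs_one, one_mul, abs_of_nonneg (mul_nonneg hA.1 hB.1), sq]
            exact mul_le_mul hA.2 hB.2 hB.1 c0
          · simp [his, hab, sq_nonneg]
        · simp [hab]
      calc _ ≤ ∑ a : Fin m, ∑ b : Fin m, (if a = b then c^2 else 0) :=
            (Finset.abs_sum_le_sum_abs _ _).trans (Finset.sum_le_sum fun a _ =>
              (Finset.abs_sum_le_sum_abs _ _).trans (Finset.sum_le_sum fun b _ => this a b))
        _ = c^2 * (m * 1) := by simp; ring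
        _ ≤ _ := by gcongr
    · have := lindsey H h2 h3 c (fun a => ∫ x in S, q i a x) (fun b => ∫ x in T, q j b x) c0
        (fun a => qI S fS i a) (fun b => qI T fT j b)
      have e : ∑ a : Fin m, ∑ b : Fin m,
        diffMat r s m H i a j b * ((∫ x in S, q i a x) * (∫ x in T, q j b x)) =
        (1/2) * ∑ a : Fin m, ∑ b : Fin m,
          H a b * ((∫ x in S, q i a x) * (∫ x in T, q j b x)) := by
        simp only [diffMat, hij, if_false, Finset.mul_sum]
        refine Finset.sum_congr rfl fun a _ => Finset.sum_congr rfl fun b _ => by ring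
      rw [e, abs_mul, abs_of_pos (by norm_num : (0:ℝ) < 1/2)]
      linarith [abs_nonneg (∑ a : Fin m, ∑ b : Fin m,
          H a b * ((∫ x in S, q i a x) * (∫ x in T, q j b x)))]
  calc _ ≤ ∑ i : Fin r, ∑ j : Fin r, c^2 * (m * Real.sqrt m) :=
        (Finset.abs_sum_le_sum_abs _ _).trans (Finset.sum_le_sum fun a _ =>
              (Finset.abs_sum_le_sum_abs _ _).trans (Finset.sum_le_sum fun b _ => blk a b))
    _ = (r:ℝ)^2 * c^2 * (m * Real.sqrt m) := by simp; ring
    _ = 1 / Real.sqrt m := by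
      have hs : Real.sqrt m ^ 2 = m := Real.sq_sqrt m0.le
      have hs0 : Real.sqrt m ≠ 0 := by positivity
      rw [hc]; push_cast
      field_simp
      exact hs

lemma backward (r s : ℕ) (hr : 1 ≤ r) (Q : GraphClass)
    (h : ∀ n : ℕ, 1 ≤ n → ∀ G : SimpleGraph (Fin n), MemCRS r s G → G ∈ Q n) :
    Wrs r s ∈ limitSet Q := by
  choose H h1 h2 h3 using had_exists
  refine ⟨isGraphon_Wrs r s, fun k => r * 2^k, fun k => hadGraph r s (2^k) (H k) (h2 k), ?_, ?_, ?_⟩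
  · intro k
    exact h _ (Nat.mul_pos hr (by positivity)) _ (hadGraph_mem _ _ _ _ _)
  · refine tendsto_atTop_mono (f := fun k => k) (fun k => ?_) tendsto_id
    have := (Nat.lt_two_pow_self (n := k)).le
    nlinarith
  · refine squeeze_zero (fun k => deltaCut_nonneg _ _) (g := fun k => 1 / Real.sqrt ((2^k : ℕ) : ℝ))
      (fun k => (deltaCut_le _ _).trans (dCut_had r s _ hr (by positivity) _ (h1 k) _ (h3 k))) ?_
    have : Tendsto (fun k : ℕ => ((2^k : ℕ) : ℝ)) atTop atTop := by
      push_cast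
      exact tendsto_pow_atTop_atTop_of_one_lt (by norm_num)
    simp only [one_div]
    exact (Real.tendsto_sqrt_atTop.comp this).inv_tendsto_atTop


/-! ### Embedding lemma -/

lemma embed_lemma (μ : Measure ℝ) [IsProbabilityMeasure μ] (n : ℕ) : ∀ δ : ℝ, 0 < δ → ∃ ε : ℝ, 0 < ε ∧
    ∀ (κ : ℝ → ℤ) (R : Fin n → Fin n → Set (ℝ × ℝ)) (B : Fin n → Set ℝ),
      (∀ k, MeasurableSet {x | κ x = k}) → (∀ k, μ.real {x | κ x = k} ≤ ε) →
      (∀ u v, MeasurableSet (R u v)) → (∀ u, MeasurableSet (B u)) → (∀ u, δ ≤ μ.real (B u)) →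
      (∀ u v, u < v → ∀ S T : Set ℝ, MeasurableSet S → MeasurableSet T → S ⊆ B u → T ⊆ B v →
        μ.real S * μ.real T / 2 - ε ≤ (μ.prod μ).real (R u v ∩ S ×ˢ T)) →
      ∃ x : Fin n → ℝ, (∀ u, x u ∈ B u) ∧ (∀ u v, u < v → (x u, x v) ∈ R u v) ∧
        (∀ u v, u < v → κ (x u) ≠ κ (x v)) := by
  induction n with
  | zero =>
    intro δ _
    exact ⟨1, one_pos, fun _ _ _ _ _ _ _ _ _ => ⟨fun _ => 0, fun u => u.elim0, fun u => u.elim0,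
      fun u => u.elim0⟩⟩
  | succ n ih =>
    intro δ hδ
    obtain ⟨ε', hε', ih⟩ := ih (δ/4) (by positivity)
    set ε := min ε' (min (δ/12) (δ^2/(12*(n+1)))) with hε
    have ε0 : 0 < ε := by positivity
    have ε1 : ε ≤ ε' := min_le_left _ _
    have ε2 : ε ≤ δ/12 := (min_le_right _ _).trans (min_le_left _ _)
    have ε3 : ε ≤ δ^2/(12*(n+1)) := (min_le_right _ _).trans (min_le_right _ _)
    refine ⟨ε, ε0, ?_⟩
    intro κ R B hκ hκε hR hB hBδ hreg
    let bad : Fin n → Set ℝ := fun v =>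
      {x | x ∈ B 0 ∧ μ (Prod.mk x ⁻¹' (R 0 v.succ ∩ Set.univ ×ˢ B v.succ)) < ENNReal.ofReal (δ/3)}
    have hm : ∀ v : Fin n, MeasurableSet (R 0 v.succ ∩ Set.univ ×ˢ B v.succ) := fun v =>
      (hR _ _).inter (MeasurableSet.univ.prod (hB _))
    have hbm : ∀ v, MeasurableSet (bad v) := fun v =>
      (hB 0).inter (measurableSet_lt (measurable_measure_prodMk_left (hm v)) measurable_const)
    have hbs : ∀ v, μ.real (bad v) ≤ 6 * ε / δ := by
      intro v
      have h1 := hreg 0 v.succ (Fin.succ_pos v) (bad v) (B v.succ) (hbm v) (hB _)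
        (fun x hx => hx.1) (subset_refl _)
      have h2 : (μ.prod μ) (R 0 v.succ ∩ bad v ×ˢ B v.succ) ≤ ENNReal.ofReal (δ/3) * μ (bad v) := by
        rw [Measure.prod_apply ((hR _ _).inter ((hbm v).prod (hB _)))]
        calc _ ≤ ∫⁻ x, (bad v).indicator (fun _ => ENNReal.ofReal (δ/3)) x ∂μ := by
              refine lintegral_mono fun x => ?_
              by_cases hx : x ∈ bad v
              · rw [Set.indicator_of_mem hx]
                refine le_trans (measure_mono ?_) hx.2.le
                intro y hy
                exact ⟨hy.1, trivial, hy.2.2⟩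
              · rw [Set.indicator_of_notMem hx]
                have : Prod.mk x ⁻¹' (R 0 v.succ ∩ bad v ×ˢ B v.succ) = ∅ := by
                  ext y
                  simp [hx]
                rw [this]; simp
          _ = _ := by rw [lintegral_indicator_const (hbm v)]
      have h3 : (μ.prod μ).real (R 0 v.succ ∩ bad v ×ˢ B v.succ) ≤ δ/3 * μ.real (bad v) := by
        have := ENNReal.toReal_mono (by finiteness) h2
        rwa [ENNReal.toReal_mul, ENNReal.toReal_ofReal (by positivity)] at this
      have h4 := hBδ v.succ
      have h5 : 0 ≤ μ.real (bad v) := measureReal_nonneg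
      rw [le_div_iff₀ hδ]
      nlinarith
    have hex : ∃ x ∈ B 0, ∀ v, x ∉ bad v := by
      by_contra! hcon
      have hsub : B 0 ⊆ ⋃ v, bad v := by
        intro x hx
        obtain ⟨v, hv⟩ := hcon x hx
        exact Set.mem_iUnion.2 ⟨v, hv⟩
      have h1 : μ.real (B 0) ≤ ∑ v : Fin n, 6 * ε / δ :=
        (measureReal_mono hsub (by finiteness)).trans ((measureReal_iUnion_fintype_le _).trans
          (Finset.sum_le_sum fun v _ => hbs v))
      have h2 := hBδ 0
      simp only [Finset.sum_const, Finset.card_univ, Fintype.card_fin, nsmul_eq_mul] at h1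
      have h3 : δ ≤ n * (6 * ε / δ) := h2.trans h1
      have h4 : δ * δ ≤ n * (6 * ε) := by
        rw [← mul_div_assoc, le_div_iff₀ hδ] at h3; exact h3
      rw [le_div_iff₀ (by positivity)] at ε3
      nlinarith
    obtain ⟨x0, hx0, hx0b⟩ := hex
    let B' : Fin n → Set ℝ := fun v =>
      Prod.mk x0 ⁻¹' (R 0 v.succ ∩ Set.univ ×ˢ B v.succ) \ {y | κ y = κ x0}
    have hB'm : ∀ v, MeasurableSet (B' v) := fun v =>
      (measurable_prodMk_left (hm v)).diff (hκ _)
    have hB'B : ∀ v, B' v ⊆ B v.succ := fun v y hy => hy.1.2.2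
    have hB'δ : ∀ v, δ/4 ≤ μ.real (B' v) := by
      intro v
      have h1 : δ/3 ≤ μ.real (Prod.mk x0 ⁻¹' (R 0 v.succ ∩ Set.univ ×ˢ B v.succ)) := by
        have : ¬ μ (Prod.mk x0 ⁻¹' (R 0 v.succ ∩ Set.univ ×ˢ B v.succ)) < ENNReal.ofReal (δ/3) :=
          fun h => hx0b v ⟨hx0, h⟩
        rw [not_lt] at this
        exact (ENNReal.ofReal_le_iff_le_toReal (by finiteness)).1 this
      have h2 := hκε (κ x0)
      have h3 : μ.real (Prod.mk x0 ⁻¹' (R 0 v.succ ∩ Set.univ ×ˢ B v.succ))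
          ≤ μ.real (B' v) + μ.real {y | κ y = κ x0} :=
        (measureReal_mono (by intro y hy; by_cases h : κ y = κ x0
                              · exact Or.inr h
                              · exact Or.inl ⟨hy, h⟩) (by finiteness)).trans
          (measureReal_union_le _ _)
      linarith
    obtain ⟨x, hx1, hx2, hx3⟩ := ih κ (fun u v => R u.succ v.succ) B' hκ
      (fun k => (hκε k).trans ε1) (fun u v => hR _ _) hB'm hB'δ (by
        intro u v huv S T hS hT hSB hTB
        have := hreg u.succ v.succ (by simpa using huv) S T hS hT (hSB.trans (hB'B u)) (hTB.trans (hB'B v))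
        linarith)
    refine ⟨Fin.cons x0 x, ?_, ?_, ?_⟩
    · intro u
      refine Fin.cases ?_ (fun u => ?_) u
      · simpa using hx0
      · simpa using hB'B u (hx1 u)
    · intro u v
      refine Fin.cases ?_ (fun u => ?_) u <;> refine Fin.cases ?_ (fun v => ?_) v
      · simp
      · intro _; simpa using (hx1 v).1.1
      · simp
      · intro h; simpa using hx2 u v (by simpa using h)
    · intro u v
      refine Fin.cases ?_ (fun u => ?_) u <;> refine Fin.cases ?_ (fun v => ?_) v
      · simp
      · intro _; simpa using fun h => (hx1 v).2 (Eq.symm h)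
      · simp
      · intro h; simpa using hx3 u v (by simpa using h)

lemma hereditary_inj (Q : GraphClass) (hQ : IsHereditary Q) {m n : ℕ} (φ : Fin m → Fin n)
    (hφ : Function.Injective φ) (G : SimpleGraph (Fin n)) (hG : G ∈ Q n) : G.comap φ ∈ Q m := by
  have h1 : StrictMono (φ ∘ Tuple.sort φ) :=
    (Tuple.monotone_sort φ).strictMono_of_injective (hφ.comp (Tuple.sort φ).injective)
  have h2 := hQ.1 _ (Tuple.sort φ)⁻¹ _ (hQ.2 _ _ _ h1 G hG)
  convert h2 using 1
  ext u v
  simp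

lemma Wrs_diff {r s : ℕ} {x y : ℝ} {i j : Fin r} (hij : i ≠ j)
    (hx : x ∈ Set.Ioc (((i:ℕ):ℝ)/r) ((((i:ℕ):ℝ)+1)/r))
    (hy : y ∈ Set.Ioc (((j:ℕ):ℝ)/r) ((((j:ℕ):ℝ)+1)/r)) : Wrs r s x y = 1/2 := by
  unfold Wrs
  rw [if_pos ⟨i, j, hij, hx, hy⟩]

lemma block_unique {r : ℕ} {x : ℝ} {i j : Fin r}
    (hx : x ∈ Set.Ioc (((i:ℕ):ℝ)/r) ((((i:ℕ):ℝ)+1)/r))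
    (hy : x ∈ Set.Ioc (((j:ℕ):ℝ)/r) ((((j:ℕ):ℝ)+1)/r)) : i = j := by
  have hr : 0 < r := i.pos
  have h1 := (ceil_cell r hr (i:ℕ) x).2 (by simpa using hx)
  have h2 := (ceil_cell r hr (j:ℕ) x).2 (by simpa using hy)
  ext
  omega

lemma Wrs_same {r s : ℕ} {x y : ℝ} {i : Fin r}
    (hx : x ∈ Set.Ioc (((i:ℕ):ℝ)/r) ((((i:ℕ):ℝ)+1)/r))
    (hy : y ∈ Set.Ioc (((i:ℕ):ℝ)/r) ((((i:ℕ):ℝ)+1)/r)) :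
    Wrs r s x y = if (i:ℕ) < s then 1 else 0 := by
  unfold Wrs
  rw [if_neg]
  · congr 1
    apply propext
    constructor
    · rintro ⟨j, h, h1, h2⟩
      rwa [block_unique hx h1]
    · intro h; exact ⟨i, h, hx, hy⟩
  · rintro ⟨j, k, h, h1, h2⟩
    exact h ((block_unique h1 hx).trans (block_unique hy h2))

lemma gog_eq {n : ℕ} (G : SimpleGraph (Fin n)) (x y : ℝ) (u v : Fin n)
    (hx : ⌈(n : ℝ) * x⌉ = ((u : ℕ) : ℤ) + 1) (hy : ⌈(n : ℝ) * y⌉ = ((v : ℕ) : ℤ) + 1) :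
    graphonOfGraph G x y = 1 ↔ G.Adj u v := by
  unfold graphonOfGraph
  constructor
  · intro h
    split_ifs at h with h'
    · obtain ⟨i, j, h, h1, h2⟩ := h'
      have e1 : u = i := by ext; omega
      have e2 : v = j := by ext; omega
      rwa [e1, e2]
    · norm_num at h
  · intro h
    rw [if_pos ⟨u, v, h, hx, hy⟩]

lemma gog_01 {n : ℕ} (G : SimpleGraph (Fin n)) (x y : ℝ) :
    graphonOfGraph G x y = 0 ∨ graphonOfGraph G x y = 1 := by
  unfold graphonOfGraph; split_ifs <;> simp

lemma forward (r s : ℕ) (hr : 1 ≤ r)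
    (Q : GraphClass) (hQ : IsHereditary Q) (hW : Wrs r s ∈ limitSet Q)
    (n : ℕ) (F : SimpleGraph (Fin n)) (hF : MemCRS r s F) : F ∈ Q n := by
  classical
  obtain ⟨hgr, nk, Gk, hGQ, hnk, hlim⟩ := hW
  obtain ⟨c, hc⟩ := hF
  have r0 : (0:ℝ) < r := by exact_mod_cast hr
  set μ : Measure ℝ := volume.restrict (Set.Icc (0:ℝ) 1) with hμ
  have : IsProbabilityMeasure μ := ⟨by simp [hμ]⟩
  obtain ⟨ε, ε0, hemb⟩ := embed_lemma μ n (1/r) (by positivity)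
  obtain ⟨k, hk1, hk2⟩ : ∃ k, deltaCut (graphonOfGraph (Gk k)) (Wrs r s) < ε ∧ 1/ε + 1 ≤ (nk k : ℝ) := by
    have a1 := hlim.eventually (gt_mem_nhds ε0)
    have a2 := (tendsto_natCast_atTop_atTop (R := ℝ)).comp hnk |>.eventually_ge_atTop (1/ε + 1)
    exact (a1.and a2).exists
  have hG' : ∃ G' ∈ Q (nk k), deltaCut (graphonOfGraph G') (Wrs r s) < ε := ⟨_, hGQ k, hk1⟩
  clear hk1
  obtain ⟨G, hGQ', hk1⟩ := hG'
  generalize nk k = N at *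
  have hN1 : (0:ℝ) < N := lt_of_lt_of_le (by positivity) hk2
  have hN : 0 < N := by exact_mod_cast hN1
  have hNε : 1 / (N:ℝ) ≤ ε := by
    rw [div_le_iff₀ hN1]
    have : ε * (1/ε + 1) ≤ ε * N := by gcongr
    have h2 : ε * (1/ε) = 1 := by field_simp
    nlinarith
  obtain ⟨_, ⟨σ₁, σ₂, hσ₁, hσ₂, rfl⟩, hcut⟩ := exists_lt_of_csInf_lt
    (by exact ⟨_, _, _, isMP_id, isMP_id, rfl⟩) hk1
  have m1 := hσ₁.1.measurable
  have m2 := hσ₂.1.measurable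
  -- the cut norm bound
  have hcb : ∀ S T : Set ℝ, MeasurableSet S → MeasurableSet T → S ⊆ Set.Icc 0 1 → T ⊆ Set.Icc 0 1 →
      |∫ p in S ×ˢ T, (graphonOfGraph G (σ₁ p.1) (σ₁ p.2) - Wrs r s (σ₂ p.1) (σ₂ p.2))| ≤ ε := by
    intro S T hS hT hS1 hT1
    refine le_trans (le_csSup ?_ (by exact ⟨S, T, hS, hT, hS1, hT1, rfl⟩)) hcut.le
    refine ⟨1, ?_⟩
    rintro _ ⟨S, T, hS, hT, hS1, hT1, rfl⟩
    have hv : (volume : Measure (ℝ × ℝ)) (S ×ˢ T) ≤ 1 := by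
      refine (measure_mono (Set.prod_mono hS1 hT1)).trans ?_
      rw [Measure.volume_eq_prod, Measure.prod_prod]; simp
    rw [← Real.norm_eq_abs]
    refine (norm_setIntegral_le_of_norm_le_const (C := 1) (hv.trans_lt (by simp)) ?_).trans ?_
    · intro p _
      have a1 := (isGraphon_Wrs r s).2.2 (σ₂ p.1) (σ₂ p.2)
      rw [Real.norm_eq_abs, abs_le]
      beta_reduce
      rcases gog_01 G (σ₁ p.1) (σ₁ p.2) with h | h <;> rw [h] <;> constructor <;>
        linarith [a1.1, a1.2]
    · rw [one_mul]
      exact ENNReal.toReal_mono (by simp) hv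
  let R : Fin n → Fin n → Set (ℝ × ℝ) := fun u v =>
    {p | graphonOfGraph G (σ₁ p.1) (σ₁ p.2) = if F.Adj u v then 1 else 0}
  let B : Fin n → Set ℝ := fun u =>
    (σ₂ ⁻¹' (Set.Ioc (((c u:ℕ):ℝ)/r) ((((c u:ℕ):ℝ)+1)/r)) ∩ σ₁ ⁻¹' (Set.Ioc 0 1)) ∩ Set.Icc 0 1
  have hgm : Measurable (fun p : ℝ × ℝ => graphonOfGraph G (σ₁ p.1) (σ₁ p.2)) :=
    (measurable_gog G).comp ((m1.comp measurable_fst).prodMk (m1.comp measurable_snd))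
  have hWm : Measurable (fun p : ℝ × ℝ => Wrs r s (σ₂ p.1) (σ₂ p.2)) :=
    (isGraphon_Wrs r s).2.1.comp ((m2.comp measurable_fst).prodMk (m2.comp measurable_snd))
  have hRm : ∀ u v, MeasurableSet (R u v) := fun u v => hgm (measurableSet_singleton _)
  have hBm : ∀ u, MeasurableSet (B u) := fun u =>
    ((m2 measurableSet_Ioc).inter (m1 measurableSet_Ioc)).inter measurableSet_Icc
  refine Exists.elim (hemb (fun x => ⌈(N:ℝ) * σ₁ x⌉) R B ?_ ?_ hRm hBm ?_ ?_) ?_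
  · intro k
    exact m1 (cell_measurable N k)
  · intro k
    have h := hσ₁.1.measure_preimage (cell_measurable N k).nullMeasurableSet
    have h' : μ {x | ⌈(N:ℝ) * σ₁ x⌉ = k} ≤ ENNReal.ofReal (1/N) := by
      refine (le_of_eq h).trans ?_
      rw [← cell_measure N hN k]
      exact Measure.restrict_apply_le _ _
    have := ENNReal.toReal_mono (by simp) h'
    rw [ENNReal.toReal_ofReal (by positivity)] at this
    exact this.trans hNε
  · intro u
    have hI : MeasurableSet (Set.Ioc (((c u:ℕ):ℝ)/r) ((((c u:ℕ):ℝ)+1)/r)) := measurableSet_Ioc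
    have h2 : μ (σ₂ ⁻¹' (Set.Ioc (((c u:ℕ):ℝ)/r) ((((c u:ℕ):ℝ)+1)/r))) = ENNReal.ofReal (1/r) := by
      rw [hσ₂.1.measure_preimage hI.nullMeasurableSet, Measure.restrict_apply hI,
        Set.inter_eq_left.2, Real.volume_Ioc]
      · congr 1; ring
      · intro y hy
        have hcu : ((c u:ℕ):ℝ) + 1 ≤ r := by exact_mod_cast (c u).2
        refine ⟨le_trans (by positivity) hy.1.le, hy.2.trans ?_⟩
        rw [div_le_one r0]; exact hcu
    have h1 : μ (σ₁ ⁻¹' (Set.Ioc 0 1))ᶜ = 0 := by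
      rw [← Set.preimage_compl, hσ₁.1.measure_preimage measurableSet_Ioc.compl.nullMeasurableSet,
        Measure.restrict_apply measurableSet_Ioc.compl]
      refine measure_mono_null (t := {0}) ?_ (by simp)
      intro y hy
      by_contra hy0
      exact hy.1 ⟨lt_of_le_of_ne hy.2.1 (Ne.symm hy0), hy.2.2⟩
    have h3 : μ (Set.Icc (0:ℝ) 1)ᶜ = 0 := by
      rw [hμ, Measure.restrict_apply measurableSet_Icc.compl]; simp
    have : μ (B u) = ENNReal.ofReal (1/r) := by
      rw [← h2]
      change μ ((_ ∩ _) ∩ _) = _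
      rw [measure_inter_conull h3, measure_inter_conull h1]
    rw [Measure.real, this, ENNReal.toReal_ofReal (by positivity)]
  · intro u v huv S T hS hT hSB hTB
    have hS1 : S ⊆ Set.Icc 0 1 := fun y hy => (hSB hy).2
    have hT1 : T ⊆ Set.Icc 0 1 := fun y hy => (hTB hy).2
    have hv : (volume : Measure (ℝ × ℝ)) (S ×ˢ T) ≤ 1 := by
      refine (measure_mono (Set.prod_mono hS1 hT1)).trans ?_
      rw [Measure.volume_eq_prod, Measure.prod_prod]; simp
    have : IsFiniteMeasure ((volume : Measure (ℝ × ℝ)).restrict (S ×ˢ T)) :=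
      isFiniteMeasure_restrict.2 (hv.trans_lt (by simp)).ne
    have hST : (volume : Measure (ℝ × ℝ)).real (S ×ˢ T) = μ.real S * μ.real T := by
      rw [Measure.real, Measure.volume_eq_prod, Measure.prod_prod, ENNReal.toReal_mul, hμ,
        Measure.real, Measure.real, Measure.restrict_eq_self _ hS1, Measure.restrict_eq_self _ hT1]
    have hRST : (μ.prod μ).real (R u v ∩ S ×ˢ T) =
        ((volume : Measure (ℝ × ℝ)).restrict (S ×ˢ T)).real (R u v) := by
      rw [Measure.real, Measure.real, hμ, Measure.prod_restrict,
        Measure.restrict_eq_self _ (Set.inter_subset_right.trans (Set.prod_mono hS1 hT1)),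
        Measure.restrict_apply (hRm u v)]
      rfl
    have hb := hcb S T hS hT hS1 hT1
    have ig : Integrable (fun p : ℝ × ℝ => graphonOfGraph G (σ₁ p.1) (σ₁ p.2))
        ((volume : Measure (ℝ × ℝ)).restrict (S ×ˢ T)) :=
      Integrable.of_bound hgm.aestronglyMeasurable 1 (ae_of_all _ fun p => by
        rcases gog_01 G (σ₁ p.1) (σ₁ p.2) with h | h <;> rw [h] <;> simp)
    have iW : Integrable (fun p : ℝ × ℝ => Wrs r s (σ₂ p.1) (σ₂ p.2))
        ((volume : Measure (ℝ × ℝ)).restrict (S ×ˢ T)) :=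
      Integrable.of_bound hWm.aestronglyMeasurable 1 (ae_of_all _ fun p => by
        have a1 := (isGraphon_Wrs r s).2.2 (σ₂ p.1) (σ₂ p.2)
        rw [Real.norm_eq_abs, abs_le]
        constructor <;> linarith [a1.1, a1.2])
    rw [integral_sub ig iW, abs_le] at hb
    have ihalf : ∫ p in S ×ˢ T, (1/2 : ℝ) = μ.real S * μ.real T / 2 := by
      rw [setIntegral_const, hST, smul_eq_mul]; ring
    rw [hRST]
    by_cases hF : F.Adj u v
    · have hR1 : ∫ p in S ×ˢ T, graphonOfGraph G (σ₁ p.1) (σ₁ p.2) =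
          ((volume : Measure (ℝ × ℝ)).restrict (S ×ˢ T)).real (R u v) := by
        rw [← integral_indicator_one (hRm u v)]
        congr 1
        ext p
        by_cases hp : p ∈ R u v
        · rw [Set.indicator_of_mem hp]
          have : graphonOfGraph G (σ₁ p.1) (σ₁ p.2) = _ := hp
          simpa [hF] using this
        · rw [Set.indicator_of_notMem hp]
          have : ¬ graphonOfGraph G (σ₁ p.1) (σ₁ p.2) = _ := hp
          rw [if_pos hF] at this
          exact (gog_01 G _ _).resolve_right this
      have hW1 : ∫ p in S ×ˢ T, (1/2 : ℝ) ≤ ∫ p in S ×ˢ T, Wrs r s (σ₂ p.1) (σ₂ p.2) := by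
        refine setIntegral_mono_on (integrable_const _) iW (hS.prod hT) ?_
        intro p hp
        have hp1 := (hSB hp.1).1.1
        have hp2 := (hTB hp.2).1.1
        by_cases hcc : c u = c v
        · have hlt : (c u : ℕ) < s := by
            by_contra! h
            exact (hc u v huv.ne hcc).2 h hF
          have hp2' : σ₂ p.2 ∈ Set.Ioc (((c v:ℕ):ℝ)/r) ((((c v:ℕ):ℝ)+1)/r) := hp2
          rw [← hcc] at hp2'
          rw [Wrs_same hp1 hp2', if_pos hlt]; norm_num
        · rw [Wrs_diff hcc hp1 hp2]
      rw [ihalf] at hW1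
      linarith [hb.1]
    · have hR1 : μ.real S * μ.real T - ∫ p in S ×ˢ T, graphonOfGraph G (σ₁ p.1) (σ₁ p.2) =
          ((volume : Measure (ℝ × ℝ)).restrict (S ×ˢ T)).real (R u v) := by
        have : μ.real S * μ.real T = ∫ p in S ×ˢ T, (1:ℝ) := by
          rw [setIntegral_const, hST, smul_eq_mul, mul_one]
        rw [← integral_indicator_one (hRm u v), this, ← integral_sub (integrable_const _) ig]
        congr 1
        ext p
        by_cases hp : p ∈ R u v
        · rw [Set.indicator_of_mem hp]
          have : graphonOfGraph G (σ₁ p.1) (σ₁ p.2) = _ := hp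
          rw [this]; simp [hF]
        · rw [Set.indicator_of_notMem hp]
          have : ¬ graphonOfGraph G (σ₁ p.1) (σ₁ p.2) = _ := hp
          rw [if_neg hF] at this
          rw [(gog_01 G _ _).resolve_left this]; simp
      have hW1 : ∫ p in S ×ˢ T, Wrs r s (σ₂ p.1) (σ₂ p.2) ≤ ∫ p in S ×ˢ T, (1/2 : ℝ) := by
        refine setIntegral_mono_on iW (integrable_const _) (hS.prod hT) ?_
        intro p hp
        have hp1 := (hSB hp.1).1.1
        have hp2 := (hTB hp.2).1.1
        by_cases hcc : c u = c v
        · have hlt : ¬ (c u : ℕ) < s := fun h => hF ((hc u v huv.ne hcc).1 h)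
          have hp2' : σ₂ p.2 ∈ Set.Ioc (((c v:ℕ):ℝ)/r) ((((c v:ℕ):ℝ)+1)/r) := hp2
          rw [← hcc] at hp2'
          rw [Wrs_same hp1 hp2', if_neg hlt]; norm_num
        · rw [Wrs_diff hcc hp1 hp2]
      rw [ihalf] at hW1
      linarith [hb.2]
  · rintro x ⟨hx1, hx2, hx3⟩
    have hcell : ∀ u, ∃ w : Fin N, ⌈(N:ℝ) * σ₁ (x u)⌉ = ((w:ℕ):ℤ) + 1 := by
      intro u
      have h := (hx1 u).1.2
      have h1 : 0 < ⌈(N:ℝ) * σ₁ (x u)⌉ := Int.ceil_pos.2 (mul_pos hN1 h.1)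
      have h2 : ⌈(N:ℝ) * σ₁ (x u)⌉ ≤ N := by
        rw [Int.ceil_le]; push_cast; nlinarith [h.2]
      refine ⟨⟨(⌈(N:ℝ) * σ₁ (x u)⌉ - 1).toNat, by omega⟩, ?_⟩
      simp only
      omega
    choose φ hφ using hcell
    have hinj : Function.Injective φ := by
      intro u v h
      by_contra hne
      rcases lt_or_gt_of_ne hne with h' | h'
      · exact hx3 u v h' (by simp only [hφ, h])
      · exact hx3 v u h' (by simp only [hφ, h])
    have hadj : ∀ u v, u < v → (G.Adj (φ u) (φ v) ↔ F.Adj u v) := by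
      intro u v huv
      have h : graphonOfGraph G (σ₁ (x u)) (σ₁ (x v)) = if F.Adj u v then 1 else 0 := hx2 u v huv
      rw [← gog_eq G _ _ _ _ (hφ u) (hφ v), h]
      by_cases hF : F.Adj u v <;> simp [hF]
    have : F = G.comap φ := by
      ext u v
      rw [SimpleGraph.comap_adj]
      rcases lt_trichotomy u v with h | h | h
      · exact (hadj u v h).symm
      · subst h; simp
      · rw [F.adj_comm, G.adj_comm]; exact (hadj v u h).symm
    rw [this]
    exact hereditary_inj Q hQ φ hinj G hGQ'

/-- Remark 1.7: for a hereditary class `Q`, `W^{(r,s)} ∈ Q̂` iff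
`C(r,s) ⊆ Q`. -/
theorem stmt19 (r s : ℕ) (hr : 1 ≤ r) (hs : s ≤ r)
    (Q : GraphClass) (hQ : IsHereditary Q) :
    Wrs r s ∈ limitSet Q ↔
      ∀ n : ℕ, 1 ≤ n → ∀ G : SimpleGraph (Fin n), MemCRS r s G → G ∈ Q n := by
  exact ⟨fun h n _ G hG => forward r s hr Q hQ h n G hG, backward r s hr Q⟩

end
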